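/- For every cardinal number α ≥ 𝔠, there exists a metrizable topological space X with |X| = α such that every quasiordered set (Q, ≤) with |Q| ≤ α has a representation by clopen subspaces of X with respect to embeddability onto clopen subspaces; that is, there is a family {X(q) : q ∈ Q} of pairwise non-homeomorphic clopen subsets of X such that q ≤ q' if and only if X(q) is homeomorphic to a clopen subset of X(q'). -/

import Mathlib

universe u

open Cardinal

/-- `A` is homeomorphic to a clopen subset of `B`. -/
def HomeoToClopenSubset (A : Type*) [TopologicalSpace A]
    (B : Type*) [TopologicalSpace B] : Prop :=
  ∃ t : Set B, IsClopen t ∧ Nonempty (A ≃ₜ t)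

/-- The representation property of the space `X` for a quasiorder, with respect to
embeddability onto clopen subspaces. -/
def RepresentsByClopenEmb (α : Cardinal.{u}) (X : Type u) [TopologicalSpace X] : Prop :=
  ∀ (Q : Type u) (le : Q → Q → Prop), #Q ≤ α →
    (∀ q, le q q) → (∀ a b c, le a b → le b c → le a c) →
    ∃ Xq : Q → Set X,
      (∀ q, IsClopen (Xq q)) ∧
      (∀ q q', q ≠ q' → IsEmpty ((Xq q) ≃ₜ (Xq q'))) ∧
      (∀ q q', le q q' ↔ HomeoToClopenSubset (Xq q) (Xq q'))

set_option linter.unusedSectionVars false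
set_option linter.style.haveILetI false
set_option linter.unusedSimpArgs false



theorem comb_aux (h : ℕ → ℕ) (Bad : Set ℕ) (hB : Bad.Infinite) (hne : ∀ k ∈ Bad, h k ≠ k)
    (hfin : ∀ n, {k | k ∈ Bad ∧ h k ≤ n}.Finite) :
    ∃ M : Set ℕ, ∀ n, ∃ k, n ≤ k ∧ k ∈ Bad ∧ k ∈ M ∧ h k ∉ M := by
  have step : ∀ k : ℕ, ∃ k', k' ∈ Bad ∧ k < k' ∧ h k < k' ∧ k < h k' := by
    intro k
    have h1 : (Bad \ ({j | j ∈ Bad ∧ h j ≤ k} ∪ Set.Iic (max k (h k)))).Infinite :=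
      hB.sdiff ((hfin k).union (Set.finite_Iic _))
    obtain ⟨k', hk', hk''⟩ := h1.nonempty
    refine ⟨k', hk', ?_⟩
    simp only [Set.mem_union, Set.mem_ofPred_eq, Set.mem_Iic, not_or, not_and, not_le] at hk''
    have := hk''.1 hk'
    have := hk''.2
    simp at this
    omega
  choose s hs1 hs2 hs3 hs4 using step
  obtain ⟨u, u0, us⟩ : ∃ u : ℕ → ℕ, u 0 = s 0 ∧ ∀ i, u (i+1) = s (u i) :=
    ⟨fun i => Nat.rec (s 0) (fun _ k => s k) i, rfl, fun i => rfl⟩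
  have uB : ∀ i, u i ∈ Bad := by
    intro i; cases i with
    | zero => rw [u0]; exact hs1 0
    | succ i => rw [us]; exact hs1 _
  have um : StrictMono u := strictMono_nat_of_lt_succ (fun i => by rw [us]; exact hs2 _)
  refine ⟨Set.range u, fun n => ⟨u (n+1), le_trans (Nat.le_succ n) um.le_apply, uB (n+1), ⟨n+1, rfl⟩, ?_⟩⟩
  rintro ⟨j, hj⟩
  rcases lt_trichotomy j (n+1) with hlt | heq | hgt
  · have : u j ≤ u n := um.monotone (by omega)
    have h4 := hs4 (u n)
    rw [← us] at h4
    omega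
  · subst heq; exact hne _ (uB _) hj.symm
  · have : u (n+1+1) ≤ u j := um.monotone (by omega)
    have h4 := hs3 (u (n+1))
    rw [← us] at h4
    omega

theorem comb (φ ψ : ℕ → ℕ) (h0 : ∀ n, φ n ≠ 0) (hψφ : ∀ n, ψ (φ n) = n)
    (hφψ : ∀ m, m ≠ 0 → φ (ψ m) = m)
    (H : ∀ M : Set ℕ, ∃ M' : Set ℕ, ∃ n0, ∀ n ≥ n0, (n / 2 ∈ M ↔ φ n / 2 ∈ M')) : False := by
  have inj : Function.Injective φ := Function.LeftInverse.injective hψφ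
  -- partner
  let pt : ℕ → ℕ := fun m => if m % 2 = 0 then m + 1 else m - 1
  have pt2 : ∀ m, pt m / 2 = m / 2 := by intro m; simp only [pt]; split_ifs <;> omega
  have ptne : ∀ m, pt m ≠ m := by intro m; simp only [pt]; split_ifs <;> omega
  have ptu : ∀ m m', m / 2 = m' / 2 → m' ≠ m → m' = pt m := by
    intro m m' h h'; simp only [pt]; split_ifs <;> omega
  have ptpt : ∀ m, pt (pt m) = m := by intro m; simp only [pt]; split_ifs <;> omega
  have ptinj : Function.Injective pt := Function.LeftInverse.injective ptpt
  let Bad : Set ℕ := {k | φ (2*k) / 2 ≠ φ (2*k+1) / 2 ∧ pt (φ (2*k)) ≠ 0}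
  let h : ℕ → ℕ := fun k => ψ (pt (φ (2*k))) / 2
  have Badfin : Bad.Finite := by
    by_contra hB
    have hB : Bad.Infinite := hB
    have hne : ∀ k ∈ Bad, h k ≠ k := by
      rintro k ⟨hk1, hk2⟩ hk
      have e1 := hφψ _ hk2
      have e2 : ψ (pt (φ (2*k))) = 2*k ∨ ψ (pt (φ (2*k))) = 2*k+1 := by
        simp only [h] at hk; omega
      rcases e2 with e2 | e2
      · rw [e2] at e1; exact ptne _ e1.symm
      · rw [e2] at e1; apply hk1; rw [e1, pt2]
    have hinj : Set.InjOn (fun k => ψ (pt (φ (2*k)))) Bad := by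
      intro k hk k' hk' hkk
      have := congrArg φ hkk
      simp only [] at this
      rw [hφψ _ hk.2, hφψ _ hk'.2] at this
      have := inj (ptinj this)
      omega
    have hfin : ∀ n, {k | k ∈ Bad ∧ h k ≤ n}.Finite := by
      intro n
      apply Set.Finite.of_finite_image (f := fun k => ψ (pt (φ (2*k))))
      · apply (Set.finite_Iic (2*n+1)).subset
        rintro _ ⟨k, ⟨_, hk⟩, rfl⟩
        simp only [h] at hk
        simp only [Set.mem_Iic]; omega
      · exact hinj.mono (fun k hk => hk.1)
    obtain ⟨M, hM⟩ := comb_aux h Bad hB hne hfin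
    obtain ⟨M', n0, hM'⟩ := H M
    -- large k so that h k is large too
    obtain ⟨b, hb⟩ := (hfin n0).bddAbove
    obtain ⟨k, hk1, hk2, hk3, hk4⟩ := hM (n0 + b + 1)
    have hhk : n0 < h k := by
      by_contra hc
      have : k ≤ b := hb ⟨hk2, by omega⟩
      omega
    have a1 := (hM' (2*k) (by omega)).1 (by simpa using hk3)
    have a2 := (hM' (ψ (pt (φ (2*k)))) (by simp only [h] at hhk; omega)).2
    rw [hφψ _ hk2.2, pt2] at a2
    exact hk4 (a2 a1)
  have Badfin2 : {k | φ (2*k) / 2 ≠ φ (2*k+1) / 2}.Finite := by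
    apply (Badfin.union (Set.Finite.preimage (f := fun k => pt (φ (2*k))) (s := {0}) ?_ (Set.finite_singleton 0))).subset
    · intro k hk
      by_cases hz : pt (φ (2*k)) = 0
      · right; exact hz
      · left; exact ⟨hk, hz⟩
    · intro a _ b _ hab
      have := inj (ptinj hab)
      omega
  obtain ⟨b, hb⟩ := Badfin2.bddAbove
  have good : ∀ k, b < k → φ (2*k) / 2 = φ (2*k+1)/2 := by
    intro k hk; by_contra hc
    have : k ≤ b := hb hc
    omega
  let F : Finset ℕ := insert 0 ((Finset.range (2*(b+1))).image φ)
  have Fc : F.card = 2*(b+1)+1 := by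
    rw [Finset.card_insert_of_notMem, Finset.card_image_of_injective _ inj, Finset.card_range]
    simp only [Finset.mem_image, not_exists, not_and]
    intro n _; exact h0 n
  have memF : ∀ m, m ∈ F ↔ (m = 0 ∨ ψ m < 2*(b+1)) := by
    intro m
    simp only [F, Finset.mem_insert, Finset.mem_image, Finset.mem_range]
    constructor
    · rintro (h | ⟨n, hn, rfl⟩)
      · exact Or.inl h
      · right; rwa [hψφ]
    · rintro (h | hm)
      · exact Or.inl h
      · by_cases hz : m = 0
        · exact Or.inl hz
        · exact Or.inr ⟨ψ m, hm, hφψ m hz⟩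
  have ptF : ∀ m, m ∈ F → pt m ∈ F := by
    intro m hm
    by_contra hc
    rw [memF] at hc
    push Not at hc
    obtain ⟨hc1, hc2⟩ := hc
    set n := ψ (pt m) with hn
    have hφn : φ n = pt m := hφψ _ hc1
    have g := good (n/2) (by omega)
    have key : φ (pt n) / 2 = φ n / 2 := by
      rcases Nat.even_or_odd' n with ⟨c, hc | hc⟩
      · have e1 : n / 2 = c := by omega
        have : pt n = 2*c+1 := by simp only [pt]; split_ifs <;> omega
        rw [this, hc, ← e1, g]
      · have e1 : n / 2 = c := by omega
        have : pt n = 2*c := by simp only [pt]; split_ifs <;> omega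
        rw [this, hc, ← e1, g]
    have := ptu (φ n) (φ (pt n)) key.symm (fun h => ptne n (inj h))
    rw [hφn, ptpt] at this
    rw [memF, ← this, hψφ] at hm
    rcases hm with hm | hm
    · exact h0 _ hm
    · have := pt2 n
      omega
  have hev : Even F.card := by
    rw [← Finset.card_attach, ← ZMod.natCast_eq_zero_iff_even]
    have := Finset.sum_involution (s := F) (f := fun _ => (1 : ZMod 2)) (fun m _ => pt m)
      (fun _ _ => by decide) (fun m _ _ => ptne m) (fun m hm => ptF m hm) (fun m _ => ptpt m)
    simpa using this
  rw [Fc] at hev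
  exact (Nat.not_even_iff_odd.2 ⟨b+1, rfl⟩) hev

section Space
open BoundedContinuousFunction Topology Filter

/-- index set of the arms -/
def JJ : Type := ℤ → Prop
instance : TopologicalSpace JJ := ⊥
instance : DiscreteTopology JJ := ⟨rfl⟩

noncomputable section

open Classical in
def spike (M : JJ) (t : ℝ) : JJ →ᵇ ℝ :=
  BoundedContinuousFunction.ofNormedAddCommGroupDiscrete (fun N => if N = M then t else 0) |t|
    (by intro N; split_ifs <;> simp)

theorem spike_self (M : JJ) (t : ℝ) : spike M t M = t := by
  simp [spike]

theorem spike_ne {M N : JJ} (h : N ≠ M) (t : ℝ) : spike M t N = 0 := by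
  simp [spike, h]

theorem spike_zero (M : JJ) : spike M 0 = 0 := by
  ext N; simp [spike]

theorem spike_continuous (M : JJ) : Continuous (spike M) := by
  apply LipschitzWith.continuous (K := 1)
  apply LipschitzWith.of_dist_le_mul
  intro s t
  rw [NNReal.coe_one, one_mul, BoundedContinuousFunction.dist_le dist_nonneg]
  intro N
  by_cases h : N = M
  · subst h; rw [spike_self, spike_self]
  · rw [spike_ne h, spike_ne h]; simp

theorem eval_continuous (M : JJ) : Continuous (fun v : JJ →ᵇ ℝ => v M) := by
  apply LipschitzWith.continuous (K := 1)
  apply LipschitzWith.of_dist_le_mul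
  intro s t
  rw [NNReal.coe_one, one_mul]
  exact BoundedContinuousFunction.dist_coe_le_dist M

/-- shift of the index set -/
def shJ : JJ ≃ JJ where
  toFun M := fun k : ℤ => M (k - 1)
  invFun M := fun k : ℤ => M (k + 1)
  left_inv M := by
    funext k
    change M (k + 1 - 1) = _
    simp
  right_inv M := by
    funext k
    change M (k - 1 + 1) = _
    simp

/-- membership -/
def memJ (k : ℤ) (M : JJ) : Prop := M k

theorem mem_shJ (k : ℤ) (M : JJ) : memJ k (shJ M) ↔ memJ (k-1) M := Iff.rfl

def shV : (JJ →ᵇ ℝ) ≃ₜ (JJ →ᵇ ℝ) where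
  toFun v := v.compContinuous ⟨shJ.symm, continuous_of_discreteTopology⟩
  invFun v := v.compContinuous ⟨shJ, continuous_of_discreteTopology⟩
  left_inv v := by ext N; simp
  right_inv v := by ext N; simp
  continuous_toFun := continuous_compContinuous _
  continuous_invFun := continuous_compContinuous _

theorem shV_spike (M : JJ) (t : ℝ) : shV (spike M t) = spike (shJ M) t := by
  ext N
  change spike M t (shJ.symm N) = _
  by_cases h : N = shJ M
  · subst h; simp [spike_self]
  · rw [spike_ne h, spike_ne]
    intro h'; apply h; rw [← h']; simp

variable (Ω : Type u) [LinearOrder Ω] [WellFoundedLT Ω] [OrderBot Ω]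
  [TopologicalSpace Ω] [DiscreteTopology Ω]

abbrev EE (Ω : Type u) : Type u := (JJ →ᵇ ℝ) × ℝ × (ℕ → Ω)

def hf (n : ℕ) : ℝ := (1/2 : ℝ)^n

theorem hf_pos (n : ℕ) : 0 < hf n := by unfold hf; positivity
theorem hf_inj {m n : ℕ} (h : hf m = hf n) : m = n := by
  unfold hf at h
  exact pow_right_injective₀ (by norm_num) (by norm_num) h

/-- membership predicate of the space -/
def inX (z : EE Ω) : Prop :=
  (∃ (M : JJ) (t : ℝ) (n : ℕ) (b : Ω), 0 ≤ t ∧ t ≤ 1 ∧ memJ (n/2 : ℕ) M ∧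
      z = (spike M t, hf n, fun _ => b)) ∨
  (∃ (M : JJ) (b : Ω), z = (spike M 1, 0, fun _ => b)) ∨
  (∃ (n : ℕ) (x : ℕ → Ω), Antitone x ∧ z = (0, hf n, x))

abbrev XX : Type u := {z : EE Ω // inX Ω z}

variable {Ω}

def vv (z : XX Ω) : JJ →ᵇ ℝ := z.1.1
def rr (z : XX Ω) : ℝ := z.1.2.1
def xx (z : XX Ω) : ℕ → Ω := z.1.2.2


theorem cont_vv : Continuous (vv : XX Ω → _) := continuous_fst.comp continuous_subtype_val
theorem cont_rr : Continuous (rr : XX Ω → _) :=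
  (continuous_fst.comp continuous_snd).comp continuous_subtype_val
theorem cont_xx : Continuous (xx : XX Ω → _) :=
  (continuous_snd.comp continuous_snd).comp continuous_subtype_val
theorem cont_xk (k : ℕ) : Continuous (fun z : XX Ω => xx z k) := (continuous_apply k).comp cont_xx

theorem ext_XX {z w : XX Ω} (h1 : vv z = vv w) (h2 : rr z = rr w) (h3 : xx z = xx w) : z = w :=
  Subtype.ext (Prod.ext h1 (Prod.ext h2 h3))

def allJ : JJ := fun _ => True
theorem mem_allJ (k : ℤ) : memJ k allJ := trivial

def armPt (M : JJ) (n : ℕ) (b : Ω) (h : memJ (n/2 : ℕ) M) (t : unitInterval) : XX Ω :=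
  ⟨(spike M t, hf n, fun _ => b), Or.inl ⟨M, t, n, b, t.2.1, t.2.2, h, rfl⟩⟩
def cPt (n : ℕ) (b : Ω) : XX Ω :=
  ⟨(0, hf n, fun _ => b), Or.inr (Or.inr ⟨n, _, antitone_const, rfl⟩)⟩
def aPt (M : JJ) (b : Ω) : XX Ω :=
  ⟨(spike M 1, 0, fun _ => b), Or.inr (Or.inl ⟨M, b, rfl⟩)⟩

theorem armPt_zero (M : JJ) (n : ℕ) (b : Ω) (h : memJ (n/2 : ℕ) M) : armPt M n b h 0 = cPt n b :=
  ext_XX (by simp [vv, armPt, cPt, spike_zero]) rfl rfl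

theorem armPt_cont (M : JJ) (n : ℕ) (b : Ω) (h : memJ (n/2 : ℕ) M) : Continuous (armPt M n b h) := by
  apply Continuous.subtype_mk
  exact ((spike_continuous M).comp continuous_subtype_val).prodMk continuous_const

theorem X_cases (z : XX Ω) : (∃ M n b h t, z = armPt M n b h t) ∨ (∃ M b, z = aPt M b) ∨
    (∃ n, vv z = 0 ∧ rr z = hf n ∧ Antitone (xx z)) := by
  obtain ⟨z, (⟨M, t, n, b, h0, h1, hM, rfl⟩ | ⟨M, b, rfl⟩ | ⟨n, x, hx, rfl⟩)⟩ := z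
  · exact Or.inl ⟨M, n, b, hM, ⟨t, h0, h1⟩, rfl⟩
  · exact Or.inr (Or.inl ⟨M, b, rfl⟩)
  · exact Or.inr (Or.inr ⟨n, rfl, rfl, hx⟩)

theorem anti (z : XX Ω) : Antitone (xx z) := by
  rcases X_cases z with (⟨M, n, b, h, t, rfl⟩ | ⟨M, b, rfl⟩ | ⟨n, _, _, h⟩)
  · exact antitone_const
  · exact antitone_const
  · exact h

theorem rr_cases (z : XX Ω) : rr z = 0 ∨ ∃ n, rr z = hf n := by
  rcases X_cases z with (⟨M, n, b, h, t, rfl⟩ | ⟨M, b, rfl⟩ | ⟨n, _, h, _⟩)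
  · exact Or.inr ⟨n, rfl⟩
  · exact Or.inl rfl
  · exact Or.inr ⟨n, h⟩

theorem rr_zero {z : XX Ω} (hz : rr z = 0) : ∃ M b, z = aPt M b := by
  rcases X_cases z with (⟨M, n, b, h, t, rfl⟩ | h | ⟨n, _, h, _⟩)
  · exact absurd hz (hf_pos n).ne'
  · exact h
  · rw [h] at hz; exact absurd hz (hf_pos n).ne'

/-- points with trivial component -/
def SS (z : XX Ω) : Prop := rr z = 0 ∨ ∃ k, xx z k ≠ xx z 0

theorem SS_aPt (M : JJ) (b : Ω) : SS (aPt M b) := Or.inl rfl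

theorem not_SS {z : XX Ω} (hz : ¬ SS z) : ∃ M n b h t, z = armPt M n b h t := by
  rcases X_cases z with (h | ⟨M, b, rfl⟩ | ⟨n, h1, h2, _⟩)
  · exact h
  · exact absurd (SS_aPt M b) hz
  · refine ⟨allJ, n, xx z 0, mem_allJ _, 0, ?_⟩
    rw [armPt_zero]
    refine ext_XX h1 h2 ?_
    funext k
    by_contra hc
    exact hz (Or.inr ⟨k, hc⟩)

theorem not_SS_arm (M : JJ) (n : ℕ) (b : Ω) (h : memJ (n/2 : ℕ) M) (t : unitInterval) :
    ¬ SS (armPt M n b h t) := by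
  rintro (h | ⟨k, hk⟩)
  · exact (hf_pos n).ne' h
  · exact hk rfl

theorem not_SS_c (n : ℕ) (b : Ω) : ¬ SS (cPt n b) := by
  rw [← armPt_zero allJ n b (mem_allJ _)]; exact not_SS_arm _ _ _ _ _

theorem nonconst {z : XX Ω} (hz : ∃ k, xx z k ≠ xx z 0) : vv z = 0 ∧ ∃ n, rr z = hf n := by
  obtain ⟨k, hk⟩ := hz
  rcases X_cases z with (⟨M, n, b, h, t, rfl⟩ | ⟨M, b, rfl⟩ | ⟨n, h1, h2, _⟩)
  · exact absurd rfl hk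
  · exact absurd rfl hk
  · exact ⟨h1, n, h2⟩

theorem rr_countable : (Set.range (rr : XX Ω → ℝ)).Countable := by
  apply ((Set.countable_singleton (0:ℝ)).union (Set.countable_range hf)).mono
  rintro _ ⟨z, rfl⟩
  rcases rr_cases z with h | ⟨n, h⟩
  · exact Or.inl h
  · exact Or.inr ⟨n, h.symm⟩

theorem precon {C : Set (XX Ω)} (hC : IsPreconnected C) {z w : XX Ω} (hz : z ∈ C) (hw : w ∈ C) :
    rr z = rr w ∧ xx z = xx w := by
  constructor
  · have h1 := hC.image rr cont_rr.continuousOn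
    exact rr_countable.isTotallyDisconnected _ (Set.image_subset_range _ _) h1
      (Set.mem_image_of_mem _ hz) (Set.mem_image_of_mem _ hw)
  · have h1 := hC.image xx cont_xx.continuousOn
    exact h1.subsingleton (Set.mem_image_of_mem _ hz) (Set.mem_image_of_mem _ hw)

theorem precon_SS {C : Set (XX Ω)} (hC : IsPreconnected C) {z w : XX Ω} (hz : z ∈ C) (hw : w ∈ C)
    (hS : SS z) : z = w := by
  obtain ⟨h1, h2⟩ := precon hC hz hw
  refine ext_XX ?_ h1 h2
  rcases hS with h | h
  · obtain ⟨M, b, rfl⟩ := rr_zero h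
    have hc := cont_vv (Ω := Ω)
    have h3 := hC.image (fun u => vv u M) ((eval_continuous M).comp cont_vv).continuousOn
    have h4 : ((fun u : XX Ω => vv u M) '' C) ⊆ {0, 1} := by
      rintro _ ⟨u, hu, rfl⟩
      have := (precon hC hz hu).1
      obtain ⟨M', b', rfl⟩ := rr_zero (this.symm.trans h)
      change spike M' 1 M ∈ _
      by_cases hM : M = M'
      · subst hM; rw [spike_self]; simp
      · rw [spike_ne hM]; simp
    have h5 := (Set.Countable.isTotallyDisconnected (s := ({0, 1} : Set ℝ)) (by simp)) _ h4 h3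
      (Set.mem_image_of_mem _ hz) (Set.mem_image_of_mem _ hw)
    obtain ⟨M', b', rfl⟩ := rr_zero (h1.symm.trans h)
    change spike M 1 M = spike M' 1 M at h5
    by_cases hM : M = M'
    · subst hM; rfl
    · rw [spike_ne hM, spike_self] at h5; norm_num at h5
  · rw [(nonconst h).1, (nonconst (z := w) (by rwa [← h2])).1]

def fiber (z : XX Ω) : Set (XX Ω) := {w | rr w = rr z ∧ xx w = xx z}

theorem fiber_precon {z : XX Ω} (hz : ¬ SS z) : IsPreconnected (fiber z) := by
  obtain ⟨M, n, b, h, t, rfl⟩ := not_SS hz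
  apply isPreconnected_of_forall (cPt n b)
  rintro w ⟨hw1, hw2⟩
  have hw : ¬ SS w := by
    rintro (h' | ⟨k, hk⟩)
    · exact (hf_pos n).ne' (hw1.symm.trans h')
    · rw [hw2] at hk; exact hk rfl
  obtain ⟨M', n', b', h', t', rfl⟩ := not_SS hw
  obtain rfl : n' = n := hf_inj hw1
  obtain rfl : b' = b := congrFun hw2 0
  refine ⟨Set.range (armPt M' n' b' h'), ?_, ⟨0, armPt_zero _ _ _ _⟩, ⟨t', rfl⟩,
    isPreconnected_range (armPt_cont _ _ _ _)⟩
  rintro _ ⟨s, rfl⟩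
  exact ⟨rfl, rfl⟩

theorem fiber_two {z : XX Ω} (hz : ¬ SS z) : ∃ w ∈ fiber z, w ≠ z := by
  obtain ⟨M, n, b, h, t, rfl⟩ := not_SS hz
  by_cases hc : armPt M n b h t = cPt n b
  · refine ⟨armPt M n b h 1, ⟨rfl, rfl⟩, ?_⟩
    rw [hc]
    intro h'
    have := congrArg (fun u => vv u M) h'
    change spike M 1 M = 0 at this
    rw [spike_self] at this
    norm_num at this
  · exact ⟨cPt n b, ⟨rfl, rfl⟩, fun h' => hc h'.symm⟩

theorem img {A B : Set (XX Ω)} (hA : IsClopen A) (e : A ≃ₜ B) (z : A) (hz : ¬ SS z.1) :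
    (∀ w ∈ fiber z.1, ∃ hw : w ∈ A, rr (e ⟨w, hw⟩).1 = rr (e z).1 ∧ xx (e ⟨w, hw⟩).1 = xx (e z).1) ∧
      ¬ SS (e z).1 := by
  have hF := fiber_precon hz
  have hz0 : z.1 ∈ fiber z.1 := ⟨rfl, rfl⟩
  have hsub : fiber z.1 ⊆ A := hF.subset_isClopen hA ⟨z.1, hz0, z.2⟩
  have h1 : IsPreconnected ((Subtype.val : A → XX Ω) ⁻¹' fiber z.1) := by
    rw [← Topology.IsInducing.subtypeVal.isPreconnected_image]
    rwa [Subtype.image_preimage_coe, Set.inter_eq_right.2 hsub]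
  have h2 := h1.image (fun a => (e a).1) (continuous_subtype_val.comp e.continuous).continuousOn
  have m1 : ∀ w (hw : w ∈ fiber z.1), (e ⟨w, hsub hw⟩).1 ∈
      (fun a => (e a).1) '' ((Subtype.val : A → XX Ω) ⁻¹' fiber z.1) :=
    fun w hw => ⟨⟨w, hsub hw⟩, hw, rfl⟩
  refine ⟨fun w hw => ⟨hsub hw, precon h2 (m1 w hw) (m1 _ hz0)⟩, ?_⟩
  intro hS
  obtain ⟨w, hw, hne⟩ := fiber_two hz
  have := precon_SS h2 (m1 _ hz0) (m1 w hw) hS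
  have := e.injective (Subtype.ext this)
  exact hne (congrArg Subtype.val this).symm

theorem SS_iff {A B : Set (XX Ω)} (hA : IsClopen A) (hB : IsClopen B) (e : A ≃ₜ B) (z : A) :
    SS (e z).1 ↔ SS z.1 := by
  constructor
  · intro h; by_contra hc; exact (img hA e z hc).2 h
  · intro h; by_contra hc
    have := (img hB e.symm (e z) hc).2
    rw [e.symm_apply_apply] at this
    exact this h


theorem exists_mn (x : ℕ → Ω) : ∃ k, ∀ j, x k ≤ x j := by
  obtain ⟨_, ⟨k, rfl⟩, hk⟩ := (wellFounded_lt (α := Ω)).has_min (Set.range x) (Set.range_nonempty x)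
  exact ⟨k, fun j => not_lt.1 (hk _ ⟨j, rfl⟩)⟩

def mn (x : ℕ → Ω) : Ω := x (Classical.choose (exists_mn x))

theorem mn_le (x : ℕ → Ω) (j : ℕ) : mn x ≤ x j := Classical.choose_spec (exists_mn x) j

theorem mn_mem (x : ℕ → Ω) : ∃ k, x k = mn x := ⟨_, rfl⟩

theorem mn_const (b : Ω) : mn (fun _ : ℕ => b) = b := rfl

open Classical in
/-- the rank of a point -/
def ell (z : XX Ω) : Ω := if vv z = 0 then mn (xx z) else ⊥

theorem ell_c (n : ℕ) (b : Ω) : ell (cPt n b) = b := by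
  have : vv (cPt n b) = 0 := rfl
  rw [ell, if_pos this]; rfl

theorem spike_ne_zero {M : JJ} {t : ℝ} (ht : t ≠ 0) : spike M t ≠ 0 := by
  intro h
  have := congrArg (fun v : JJ →ᵇ ℝ => v M) h
  simp only [spike_self] at this
  exact ht this

theorem vv_zero_rr {z : XX Ω} (h : vv z = 0) : ∃ n, rr z = hf n := by
  rcases rr_cases z with h' | h'
  · obtain ⟨M, b, rfl⟩ := rr_zero h'
    exact absurd h (spike_ne_zero one_ne_zero)
  · exact h'

theorem ell_below (z : XX Ω) (g : Ω) (hg : g < ell z) (U : Set (XX Ω)) (hU : IsOpen U) (hz : z ∈ U) :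
    ∃ y ∈ U, SS y ∧ ell y = g := by
  have hv : vv z = 0 := by
    by_contra hc
    rw [ell, if_neg hc] at hg
    exact not_lt_bot hg
  rw [ell, if_pos hv] at hg
  obtain ⟨n, hn⟩ := vv_zero_rr hv
  let x' : ℕ → ℕ → Ω := fun k j => if j ≤ k then xx z j else g
  have hx' : ∀ k, Antitone (x' k) := by
    intro k i j hij
    simp only [x']
    split_ifs with h1 h2 h2
    · exact anti z hij
    · omega
    · exact (hg.trans_le (mn_le _ _)).le
    · exact le_rfl
  let y : ℕ → XX Ω := fun k => ⟨(0, hf n, x' k), Or.inr (Or.inr ⟨n, x' k, hx' k, rfl⟩)⟩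
  have hy : Tendsto y atTop (𝓝 z) := by
    rw [tendsto_subtype_rng]
    have hz1 : z.1 = (0, hf n, xx z) := Prod.ext hv (Prod.ext hn rfl)
    rw [hz1]
    refine tendsto_const_nhds.prodMk_nhds (tendsto_const_nhds.prodMk_nhds ?_)
    rw [tendsto_pi_nhds]
    intro j
    apply tendsto_const_nhds.congr'
    filter_upwards [eventually_ge_atTop j] with k hk
    simp only [x', if_pos hk]
  obtain ⟨k, hk⟩ := (hy.eventually (hU.mem_nhds hz)).exists
  refine ⟨y k, hk, Or.inr ⟨k+1, ?_⟩, ?_⟩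
  · change x' k (k+1) ≠ x' k 0
    simp only [x', if_neg (show ¬ (k+1 ≤ k) by omega), if_pos (Nat.zero_le k)]
    exact (hg.trans_le (mn_le _ _)).ne
  · have : vv (y k) = 0 := rfl
    rw [ell, if_pos this]
    change mn (x' k) = g
    apply le_antisymm
    · refine (mn_le _ (k+1)).trans (le_of_eq ?_)
      simp only [x', if_neg (show ¬ (k+1 ≤ k) by omega)]
    · obtain ⟨j, hj⟩ := mn_mem (x' k)
      rw [← hj]
      simp only [x']
      split_ifs
      · exact (hg.trans_le (mn_le _ _)).le
      · exact le_rfl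

theorem isOpen_xk (k : ℕ) (b : Ω) : IsOpen {w : XX Ω | xx w k = b} :=
  (isOpen_discrete ({b} : Set Ω)).preimage (cont_xk k)

theorem hf_near {m n : ℕ} (h1 : hf n / 2 < hf m) (h2 : hf m < 2 * hf n) : m = n := by
  have e1 : hf (n+1) = hf n / 2 := by unfold hf; rw [pow_succ]; ring
  have e2 : hf (m+1) = hf m / 2 := by unfold hf; rw [pow_succ]; ring
  have anti : StrictAnti hf := by
    intro a b hab
    unfold hf
    exact pow_lt_pow_right_of_lt_one₀ (by norm_num) (by norm_num) hab
  rw [← e1, anti.lt_iff_gt] at h1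
  have : hf (m+1) < hf n := by rw [e2]; linarith
  rw [anti.lt_iff_gt] at this
  omega

theorem spike_half {M M' : JJ} {t : ℝ} (h : 1/2 < spike M t M') : M = M' := by
  by_contra hc
  rw [spike_ne (Ne.symm hc)] at h
  norm_num at h

theorem ell_local (z : XX Ω) : ∃ U : Set (XX Ω), IsOpen U ∧ z ∈ U ∧
    ∀ y ∈ U, SS y → y ≠ z → ell y < ell z := by
  by_cases hv : vv z = 0
  · obtain ⟨n, hn⟩ := vv_zero_rr hv
    obtain ⟨k, hk⟩ := mn_mem (xx z)
    refine ⟨(⋂ j ∈ Finset.range (k+1), {w | xx w j = xx z j}) ∩ {w | rr w ∈ Set.Ioo (hf n / 2) (2 * hf n)},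
      ?_, ?_, ?_⟩
    · apply IsOpen.inter
      · exact isOpen_biInter_finset (fun j _ => isOpen_xk _ _)
      · exact isOpen_Ioo.preimage cont_rr
    · have := hf_pos n
      refine ⟨by simp, ?_⟩
      change rr z ∈ Set.Ioo (hf n / 2) (2 * hf n)
      rw [hn]; constructor <;> linarith
    · rintro y ⟨hy1, hy2⟩ hS hne
      have hy1 : ∀ j ≤ k, xx y j = xx z j := by
        intro j hj
        simp only [Set.mem_iInter] at hy1
        exact hy1 j (Finset.mem_range.2 (by omega))
      obtain ⟨hy2, hy3⟩ := hy2
      have hr : rr y ≠ 0 := by have := hf_pos n; intro h; rw [h] at hy2; linarith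
      have hnc : ∃ k, xx y k ≠ xx y 0 := hS.resolve_left hr
      obtain ⟨hvy, m, hm⟩ := nonconst hnc
      rw [hm] at hy2 hy3
      obtain rfl := hf_near hy2 hy3
      have hxne : xx y ≠ xx z := fun h => hne (ext_XX (hvy.trans hv.symm) (hm.trans hn.symm) h)
      obtain ⟨j, hj⟩ := Function.ne_iff.1 hxne
      have hjk : k < j := by
        by_contra hc; exact hj (hy1 j (by omega))
      have hzj : xx z j = mn (xx z) :=
        le_antisymm ((anti z hjk.le).trans_eq hk) (mn_le _ _)
      have hyj : xx y j ≤ mn (xx z) := (anti y hjk.le).trans_eq ((hy1 k le_rfl).trans hk)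
      rw [ell, ell, if_pos hv, if_pos hvy]
      exact (mn_le _ j).trans_lt (lt_of_le_of_ne hyj (by rwa [hzj] at hj))
  · by_cases hr : rr z = 0
    · obtain ⟨M, b, rfl⟩ := rr_zero hr
      refine ⟨{w | 1/2 < vv w M} ∩ {w | xx w 0 = b}, ?_, ?_, ?_⟩
      · exact (isOpen_Ioi.preimage ((eval_continuous M).comp cont_vv)).inter (isOpen_xk _ _)
      · refine ⟨?_, rfl⟩
        change 1/2 < spike M 1 M
        rw [spike_self]; norm_num
      · rintro y ⟨hy1, hy2⟩ hS hne
        exfalso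
        rcases hS with h | h
        · obtain ⟨M', b', rfl⟩ := rr_zero h
          obtain rfl : b' = b := hy2
          obtain rfl := spike_half hy1
          exact hne rfl
        · have : (1/2 : ℝ) < vv y M := hy1
          rw [(nonconst h).1] at this
          norm_num at this
    · refine ⟨{w | vv w ≠ 0} ∩ {w | rr w ≠ 0}, ?_, ⟨hv, hr⟩, ?_⟩
      · exact (isOpen_ne.preimage cont_vv).inter (isOpen_ne.preimage cont_rr)
      · rintro y ⟨hy1, hy2⟩ hS hne
        exfalso
        rcases hS with h | h
        · exact hy2 h
        · exact hy1 (nonconst h).1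

theorem ell_step {A B : Set (XX Ω)} (hA : IsClopen A) (hB : IsClopen B) (e : A ≃ₜ B) (g : Ω)
    (IH : ∀ g' < g, ∀ z : A, ell z.1 = g' ↔ ell (e z).1 = g') (z : A) (hz : ell z.1 = g) :
    ell (e z).1 = g := by
  rcases lt_trichotomy (ell (e z).1) g with h | h | h
  · have := (IH _ h z).2 rfl
    rw [this] at hz
    exact absurd hz h.ne
  · exact h
  · exfalso
    obtain ⟨U, hU, hzU, hlt⟩ := ell_local z.1
    have hV : IsOpen (Subtype.val '' (e.symm ⁻¹' (Subtype.val ⁻¹' U)) : Set (XX Ω)) :=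
      hB.isOpen.isOpenMap_subtype_val _
        ((hU.preimage continuous_subtype_val).preimage e.symm.continuous)
    obtain ⟨_, ⟨y, hyU, rfl⟩, hyS, hyg⟩ := ell_below (e z).1 g h _ hV
      ⟨e z, by simpa using hzU, rfl⟩
    have hyS' : SS (e.symm y).1 := (SS_iff hB hA e.symm y).2 hyS
    have hne : (e.symm y).1 ≠ z.1 := by
      intro h'
      have : e.symm y = z := Subtype.ext h'
      rw [← this, e.apply_symm_apply, hyg] at h
      exact lt_irrefl _ h
    have h1 := hlt _ hyU hyS' hne
    rw [hz] at h1
    have h2 := (IH _ h1 (e.symm y)).1 rfl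
    rw [e.apply_symm_apply, hyg] at h2
    rw [← h2] at h1
    exact lt_irrefl _ h1

theorem ell_eq {A B : Set (XX Ω)} (hA : IsClopen A) (hB : IsClopen B) (e : A ≃ₜ B) (z : A) :
    ell (e z).1 = ell z.1 := by
  have key : ∀ g : Ω, ∀ z : A, ell z.1 = g ↔ ell (e z).1 = g := by
    intro g
    induction g using WellFoundedLT.induction with
    | ind g IH =>
      intro z
      refine ⟨ell_step hA hB e g IH z, fun h => ?_⟩
      have := ell_step hB hA e.symm g (fun g' hg' y => by
        have := IH g' hg' (e.symm y)
        rw [e.apply_symm_apply] at this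
        exact this.symm) (e z) h
      rwa [e.symm_apply_apply] at this
  exact (key _ z).1 rfl

theorem is_c {z : XX Ω} (hS : ¬ SS z) {b : Ω} (hb : b ≠ ⊥) (h : ell z = b) : ∃ n, z = cPt n b := by
  have hv : vv z = 0 := by
    by_contra hc; rw [ell, if_neg hc] at h; exact hb h.symm
  rw [ell, if_pos hv] at h
  obtain ⟨M, n, b', h', t, rfl⟩ := not_SS hS
  obtain rfl : b' = b := h
  exact ⟨n, ext_XX hv rfl rfl⟩

theorem c_map {A B : Set (XX Ω)} (hA : IsClopen A) (hB : IsClopen B) (e : A ≃ₜ B) {b : Ω}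
    (hb : b ≠ ⊥) (n : ℕ) (hc : cPt n b ∈ A) : ∃ m, (e ⟨cPt n b, hc⟩).1 = cPt m b := by
  apply is_c _ hb
  · rw [ell_eq hA hB]; exact ell_c n b
  · rw [SS_iff hA hB]; exact not_SS_c n b

theorem near (M : JJ) (b : Ω) (O : Set (XX Ω)) (hO : IsOpen O) (h : aPt M b ∈ O) :
    ∃ n0, ∀ n ≥ n0, ∀ h : memJ (n/2 : ℕ) M, armPt M n b h 1 ∈ O := by
  obtain ⟨O', hO', rfl⟩ := isOpen_induced_iff.1 hO
  have ht : Tendsto (fun n : ℕ => ((spike M 1, hf n, fun _ => b) : EE Ω)) atTop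
      (𝓝 (spike M 1, 0, fun _ => b)) := by
    refine tendsto_const_nhds.prodMk_nhds (Tendsto.prodMk_nhds ?_ tendsto_const_nhds)
    exact tendsto_pow_atTop_nhds_zero_of_lt_one (by norm_num) (by norm_num)
  obtain ⟨n0, hn0⟩ := eventually_atTop.1 (ht.eventually (hO'.mem_nhds h))
  exact ⟨n0, fun n hn _ => hn0 n hn⟩

theorem near_img {A B : Set (XX Ω)} (hA : IsClopen A) (e : A ≃ₜ B) (M : JJ) (b : Ω)
    (ha : aPt M b ∈ A) (W : Set (XX Ω)) (hW : IsOpen W) (h : (e ⟨aPt M b, ha⟩).1 ∈ W) :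
    ∃ n0, ∀ n ≥ n0, memJ (n/2 : ℕ) M → ∀ hc : cPt n b ∈ A, ∃ w ∈ W,
      rr w = rr (e ⟨cPt n b, hc⟩).1 ∧ xx w = xx (e ⟨cPt n b, hc⟩).1 := by
  have hV : IsOpen (Subtype.val '' (e ⁻¹' (Subtype.val ⁻¹' W)) : Set (XX Ω)) :=
    hA.isOpen.isOpenMap_subtype_val _
      ((hW.preimage continuous_subtype_val).preimage e.continuous)
  obtain ⟨n0, hn0⟩ := near M b _ hV ⟨⟨aPt M b, ha⟩, h, rfl⟩
  refine ⟨n0, fun n hn hm hc => ?_⟩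
  obtain ⟨p, hp, hpe⟩ := hn0 n hn hm
  obtain ⟨hw, h1⟩ := (img hA e ⟨cPt n b, hc⟩ (not_SS_c n b)).1 (armPt M n b hm 1) ⟨rfl, rfl⟩
  have : p = ⟨armPt M n b hm 1, hw⟩ := Subtype.ext hpe
  subst this
  exact ⟨_, hp, h1⟩

theorem half {A B : Set (XX Ω)} (hA : IsClopen A) (e : A ≃ₜ B) (M M' : JJ) (b : Ω)
    (ha : aPt M b ∈ A) (h : (e ⟨aPt M b, ha⟩).1 = aPt M' b) :
    ∃ n0, ∀ n ≥ n0, memJ (n/2 : ℕ) M → ∀ hc : cPt n b ∈ A, ∀ m,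
      (e ⟨cPt n b, hc⟩).1 = cPt m b → memJ (m/2 : ℕ) M' := by
  obtain ⟨n0, hn0⟩ := near_img hA e M b ha {w | 1/2 < vv w M'}
    (isOpen_Ioi.preimage ((eval_continuous M').comp cont_vv)) (by
      rw [h]
      change 1/2 < spike M' 1 M'
      rw [spike_self]; norm_num)
  refine ⟨n0, fun n hn hm hc m he => ?_⟩
  obtain ⟨w, hw, h1, h2⟩ := hn0 n hn hm hc
  rw [he] at h1
  have hw : 1/2 < vv w M' := hw
  rcases X_cases w with (⟨M1, n1, b1, h', t, rfl⟩ | ⟨M1, b1, rfl⟩ | ⟨n1, h', _⟩)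
  · obtain rfl := spike_half hw
    obtain rfl : n1 = m := hf_inj h1
    exact h'
  · exact absurd h1.symm (hf_pos m).ne'
  · rw [h'] at hw; norm_num at hw

theorem rigid {A B : Set (XX Ω)} (hA : IsClopen A) (hB : IsClopen B) (e : A ≃ₜ B) (b : Ω)
    (hb : b ≠ ⊥) (hAb : ∀ z, xx z 0 = b → z ∈ A) (hBb : ∀ z, xx z 0 = b → (z ∈ B ↔ rr z ≠ 1)) :
    False := by
  have hcA : ∀ n, cPt n b ∈ A := fun n => hAb _ rfl
  have hf0 : hf 0 = 1 := by simp [hf]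
  have hcB : ∀ n, cPt n b ∈ B ↔ n ≠ 0 := by
    intro n
    rw [hBb _ rfl]
    change hf n ≠ 1 ↔ _
    rw [← hf0]
    exact ⟨fun h h' => h (by rw [h']), fun h h' => h (hf_inj h')⟩
  choose φ hφ using fun n => c_map hA hB e hb n (hcA n)
  have hφ0 : ∀ n, φ n ≠ 0 := by
    intro n
    rw [← hcB, ← hφ n]
    exact (e _).2
  have hex : ∀ m, ∃ n, m ≠ 0 → ∀ hc : cPt m b ∈ B, (e.symm ⟨cPt m b, hc⟩).1 = cPt n b := by
    intro m
    by_cases hm : m = 0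
    · exact ⟨0, fun h => absurd hm h⟩
    · obtain ⟨n, hn⟩ := c_map hB hA e.symm hb m ((hcB m).2 hm)
      exact ⟨n, fun _ _ => hn⟩
  choose ψ hψ using hex
  have cinj : ∀ {m n : ℕ}, cPt m b = cPt n b → m = n := fun h => hf_inj (congrArg rr h)
  have hψφ : ∀ n, ψ (φ n) = n := by
    intro n
    have h1 := hψ (φ n) (hφ0 n) ((hcB _).2 (hφ0 n))
    have h2 : (⟨cPt (φ n) b, (hcB _).2 (hφ0 n)⟩ : B) = e ⟨cPt n b, hcA n⟩ := Subtype.ext (hφ n).symm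
    rw [h2, e.symm_apply_apply] at h1
    exact (cinj h1).symm
  have hφψ : ∀ m, m ≠ 0 → φ (ψ m) = m := by
    intro m hm
    have h1 := hψ m hm ((hcB m).2 hm)
    have h2 : (⟨cPt (ψ m) b, hcA _⟩ : A) = e.symm ⟨cPt m b, (hcB m).2 hm⟩ := Subtype.ext h1.symm
    have h3 := hφ (ψ m)
    rw [h2, e.apply_symm_apply] at h3
    exact (cinj h3).symm
  apply comb φ ψ hφ0 hψφ hφψ
  intro M
  by_cases hinf : ∃ n0, ∀ n ≥ n0, n / 2 ∉ M
  · obtain ⟨n0, hn0⟩ := hinf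
    exact ⟨∅, n0, fun n hn => by simp [hn0 n hn]⟩
  push Not at hinf
  let MJ : JJ := fun k => k.toNat ∈ M
  have memMJ : ∀ n : ℕ, memJ n MJ ↔ n ∈ M := fun n => by simp [memJ, MJ]
  have ha : aPt MJ b ∈ A := hAb _ rfl
  have hxe : xx (e ⟨aPt MJ b, ha⟩).1 = fun _ => b := by
    funext k
    by_contra hc
    obtain ⟨n0, hn0⟩ := near_img hA e MJ b ha {w | xx w k ≠ b}
      ((isOpen_discrete ({b}ᶜ : Set Ω)).preimage (cont_xk k)) hc
    obtain ⟨n, hn, hnM⟩ := hinf n0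
    obtain ⟨w, hw, h1, h2⟩ := hn0 n hn ((memMJ _).2 hnM) (hcA n)
    rw [hφ n] at h2
    apply hw
    rw [h2]; rfl
  have hre : rr (e ⟨aPt MJ b, ha⟩).1 = 0 := by
    rcases (SS_iff hA hB e ⟨aPt MJ b, ha⟩).2 (SS_aPt _ _) with h | ⟨k, hk⟩
    · exact h
    · rw [hxe] at hk; exact absurd rfl hk
  obtain ⟨M', b', hM'⟩ := rr_zero hre
  obtain rfl : b' = b := by
    have := congrFun hxe 0
    rw [hM'] at this; exact this
  obtain ⟨n1, hn1⟩ := half hA e MJ M' b' ha hM'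
  have haB : aPt M' b' ∈ B := hM' ▸ (e _).2
  obtain ⟨n2, hn2⟩ := half hB e.symm M' MJ b' haB (by
    have : (⟨aPt M' b', haB⟩ : B) = e ⟨aPt MJ b', ha⟩ := Subtype.ext hM'.symm
    rw [this, e.symm_apply_apply])
  have inj : Function.Injective φ := Function.LeftInverse.injective hψφ
  have hfin : {n | φ n < n2}.Finite :=
    Set.Finite.preimage (f := φ) (s := Set.Iio n2) inj.injOn (Set.finite_Iio n2)
  obtain ⟨n3, hn3⟩ := hfin.bddAbove
  refine ⟨{k | memJ k M'}, n1 + n3 + 1, fun n hn => ⟨fun h => ?_, fun h => ?_⟩⟩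
  · exact hn1 n (by omega) ((memMJ _).2 h) (hcA n) _ (hφ n)
  · have hge : φ n ≥ n2 := by
      by_contra hc
      have : n ≤ n3 := hn3 (show φ n < n2 by omega)
      omega
    have := hn2 (φ n) hge h ((hcB _).2 (hφ0 n)) n (by
      have := hψ (φ n) (hφ0 n) ((hcB _).2 (hφ0 n))
      rwa [hψφ] at this)
    exact (memMJ _).1 this


theorem hf_quarter (n : ℕ) : hf n / 4 = hf (n+2) := by unfold hf; rw [pow_add]; ring

def sig (z : XX Ω) : XX Ω := ⟨(shV z.1.1, z.1.2.1 / 4, z.1.2.2), by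
  obtain ⟨z, (⟨M, t, n, b, h0, h1, hM, rfl⟩ | ⟨M, b, rfl⟩ | ⟨n, x, hx, rfl⟩)⟩ := z
  · refine Or.inl ⟨shJ M, t, n+2, b, h0, h1, ?_, ?_⟩
    · rw [mem_shJ]
      have : (((n+2)/2 : ℕ) : ℤ) - 1 = (n/2 : ℕ) := by omega
      rwa [this]
    · simp only [shV_spike, hf_quarter]
  · refine Or.inr (Or.inl ⟨shJ M, b, ?_⟩)
    simp only [shV_spike, zero_div]
  · refine Or.inr (Or.inr ⟨n+2, x, hx, ?_⟩)
    have : shV 0 = 0 := by rw [← spike_zero allJ, shV_spike, spike_zero, spike_zero]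
    simp only [this, hf_quarter]⟩

theorem sig_embedding : IsEmbedding (sig : XX Ω → XX Ω) := by
  let q : ℝ ≃ₜ ℝ := Homeomorph.mulRight₀ (4⁻¹ : ℝ) (by norm_num)
  let G : EE Ω ≃ₜ EE Ω := shV.prodCongr (q.prodCongr (Homeomorph.refl _))
  have hG : IsEmbedding (fun z : XX Ω => G z.1) := G.isEmbedding.comp IsEmbedding.subtypeVal
  have hcomp : (fun z : XX Ω => G z.1) = Subtype.val ∘ (sig : XX Ω → XX Ω) := by
    funext z
    change (shV z.1.1, z.1.2.1 * 4⁻¹, z.1.2.2) = (shV z.1.1, z.1.2.1 / 4, z.1.2.2)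
    rw [div_eq_mul_inv]
  rw [hcomp] at hG
  exact IsEmbedding.of_comp (IsInducing.subtypeVal.continuous_iff.2 hG.continuous)
    continuous_subtype_val hG

theorem hf_zero : hf 0 = 1 := by simp [hf]
theorem hf_one : hf 1 = 1/2 := by simp [hf]

theorem clopen_r (n : ℕ) : IsClopen {z : XX Ω | rr z = hf n} := by
  refine ⟨isClosed_singleton.preimage cont_rr, ?_⟩
  have : {z : XX Ω | rr z = hf n} = rr ⁻¹' (Set.Ioo (hf n / 2) (2 * hf n)) := by
    ext z
    have hp := hf_pos n
    constructor
    · intro h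
      have h : rr z = hf n := h
      rw [Set.mem_preimage, h]; constructor <;> linarith
    · rintro ⟨h1, h2⟩
      rcases rr_cases z with h | ⟨m, h⟩
      · rw [h] at h1; linarith
      · rw [h] at h1 h2
        rw [hf_near h1 h2] at h; exact h
  rw [this]
  exact isOpen_Ioo.preimage cont_rr

theorem clopen_x (S : Set Ω) : IsClopen {z : XX Ω | xx z 0 ∈ S} :=
  (isClopen_discrete S).preimage (cont_xk 0)

theorem sig_range : Set.range (sig : XX Ω → XX Ω) = {z | rr z = hf 0}ᶜ ∩ {z | rr z = hf 1}ᶜ := by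
  ext z
  constructor
  · rintro ⟨w, rfl⟩
    have hw : rr (sig w) = rr w / 4 := rfl
    have hlt : rr (sig w) < 1/2 := by
      rw [hw]
      rcases rr_cases w with h | ⟨m, h⟩
      · rw [h]; norm_num
      · have : hf m ≤ 1 := pow_le_one₀ (by norm_num) (by norm_num)
        rw [h]; linarith
    refine ⟨fun h => ?_, fun h => ?_⟩
    · have h : rr (sig w) = hf 0 := h
      rw [hf_zero] at h; linarith
    · have h : rr (sig w) = hf 1 := h
      rw [hf_one] at h; linarith
  · rintro ⟨h0, h1⟩
    have hn : ∀ n, rr z = hf n → ∃ m, n = m + 2 := by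
      intro n hn
      have a0 : n ≠ 0 := by rintro rfl; exact h0 hn
      have a1 : n ≠ 1 := by rintro rfl; exact h1 hn
      exact ⟨n - 2, by omega⟩
    rcases X_cases z with (⟨M, n, b, h, t, rfl⟩ | ⟨M, b, rfl⟩ | ⟨n, hv, hr, hx⟩)
    · obtain ⟨m, rfl⟩ := hn n rfl
      refine ⟨armPt (shJ.symm M) m b ?_ t, ?_⟩
      · rw [← shJ.apply_symm_apply M, mem_shJ] at h
        have : (((m+2)/2 : ℕ) : ℤ) - 1 = (m/2 : ℕ) := by omega
        rwa [this] at h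
      · refine ext_XX ?_ (hf_quarter m) rfl
        change shV (spike _ _) = spike _ _
        rw [shV_spike, shJ.apply_symm_apply]
    · refine ⟨aPt (shJ.symm M) b, ext_XX ?_ (zero_div _) rfl⟩
      change shV (spike _ _) = spike _ _
      rw [shV_spike, shJ.apply_symm_apply]
    · obtain ⟨m, rfl⟩ := hn n hr
      refine ⟨⟨(0, hf m, xx z), Or.inr (Or.inr ⟨m, _, hx, rfl⟩)⟩, ext_XX ?_ ?_ rfl⟩
      · rw [hv]
        change shV 0 = 0
        rw [← spike_zero allJ, shV_spike, spike_zero, spike_zero]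
      · rw [hr]; exact hf_quarter m

theorem sig_clopen {A : Set (XX Ω)} (hA : IsClopen A) : IsClopen (sig '' A) := by
  have hr : IsClopen (Set.range (sig : XX Ω → XX Ω)) := by
    rw [sig_range]; exact (clopen_r 0).compl.inter (clopen_r 1).compl
  exact ⟨(IsClosedEmbedding.mk sig_embedding hr.1).isClosedMap _ hA.1,
    (IsOpenEmbedding.mk sig_embedding hr.2).isOpenMap _ hA.2⟩

theorem sig_ne_one (z : XX Ω) : rr (sig z) ≠ 1 := by
  have : sig z ∈ Set.range (sig : XX Ω → XX Ω) := ⟨z, rfl⟩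
  rw [sig_range] at this
  rw [← hf_zero]; exact this.1

def XQ {Q : Type u} (le : Q → Q → Prop) (ι : Q → Ω) (q : Q) : Set (XX Ω) :=
  {z | ∃ p, le p q ∧ xx z 0 = ι p ∧ (rr z = 1 → p = q)}

theorem XQ_clopen {Q : Type u} (le : Q → Q → Prop) (hr : ∀ q, le q q) (ι : Q → Ω) (q : Q) :
    IsClopen (XQ le ι q) := by
  have : XQ le ι q = ({z | xx z 0 ∈ {b | ∃ p, le p q ∧ b = ι p}} ∩ {z | rr z = hf 0}ᶜ) ∪
      {z | xx z 0 ∈ ({ι q} : Set Ω)} := by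
    ext z
    constructor
    · rintro ⟨p, h1, h2, h3⟩
      by_cases h : rr z = 1
      · right; rw [← h3 h]; exact h2
      · left; exact ⟨⟨p, h1, h2⟩, fun h' => h (Eq.trans h' hf_zero)⟩
    · rintro (⟨⟨p, h1, h2⟩, h3⟩ | h)
      · exact ⟨p, h1, h2, fun h => absurd (h.trans hf_zero.symm) h3⟩
      · exact ⟨q, hr q, h, fun _ => rfl⟩
  rw [this]
  exact ((clopen_x _).inter (clopen_r 0).compl).union (clopen_x _)

theorem val_image_clopen {X : Type u} [TopologicalSpace X] {B : Set X} (hB : IsClopen B) {t : Set B}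
    (ht : IsClopen t) : IsClopen (Subtype.val '' t : Set X) :=
  ⟨hB.1.isClosedMap_subtype_val _ ht.1, hB.2.isOpenMap_subtype_val _ ht.2⟩

theorem represents (α : Cardinal.{u}) (hι : ∀ (Q : Type u), #Q ≤ α → ∃ ι : Q → Ω,
    Function.Injective ι ∧ ∀ q, ι q ≠ ⊥) : RepresentsByClopenEmb α (XX Ω) := by
  intro Q le hQ hrefl htrans
  obtain ⟨ι, hinj, hbot⟩ := hι Q hQ
  have hcl := XQ_clopen le hrefl ι
  have back : ∀ q q', HomeoToClopenSubset (XQ le ι q) (XQ le ι q') → le q q' := by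
    rintro q q' ⟨t, ht, ⟨f⟩⟩
    have ht' := val_image_clopen (hcl q') ht
    let e : XQ le ι q ≃ₜ (Subtype.val '' t : Set (XX Ω)) :=
      f.trans (IsEmbedding.subtypeVal.homeomorphImage t)
    have hc : cPt 0 (ι q) ∈ XQ le ι q := ⟨q, hrefl q, rfl, fun _ => rfl⟩
    obtain ⟨m, hm⟩ := c_map (hcl q) ht' e (hbot q) 0 hc
    obtain ⟨w, hw, hwe⟩ := (e ⟨_, hc⟩).2
    obtain ⟨p, h1, h2, _⟩ := w.2
    rw [hwe, hm] at h2
    rw [hinj h2]; exact h1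
  refine ⟨XQ le ι, hcl, ?_, ?_⟩
  · intro q q' hne
    refine ⟨fun e => ?_⟩
    have hle : le q q' := back q q' ⟨Set.univ, isClopen_univ, ⟨e.trans (Homeomorph.Set.univ _).symm⟩⟩
    refine rigid (hcl q) (hcl q') e (ι q) (hbot q) (fun z hz => ⟨q, hrefl q, hz, fun _ => rfl⟩) ?_
    intro z hz
    constructor
    · rintro ⟨p, h1, h2, h3⟩ h
      have : q = p := hinj (hz.symm.trans h2)
      exact hne (this.trans (h3 h))
    · intro h
      exact ⟨q, hle, hz, fun h' => absurd h' h⟩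
  · intro q q'
    refine ⟨fun hle => ?_, back q q'⟩
    have hsub : sig '' XQ le ι q ⊆ XQ le ι q' := by
      rintro _ ⟨z, ⟨p, h1, h2, h3⟩, rfl⟩
      exact ⟨p, htrans _ _ _ h1 hle, h2, fun h => absurd h (sig_ne_one z)⟩
    refine ⟨Subtype.val ⁻¹' (sig '' XQ le ι q),
      (sig_clopen (hcl q)).preimage continuous_subtype_val, ⟨?_⟩⟩
    refine (sig_embedding.homeomorphImage (XQ le ι q)).trans ?_
    refine Homeomorph.trans (Homeomorph.setCongr ?_) (IsEmbedding.subtypeVal.homeomorphImage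
      (Subtype.val ⁻¹' (sig '' XQ le ι q) : Set (XQ le ι q'))).symm
    rw [Subtype.image_preimage_coe, Set.inter_eq_right.2 hsub]

theorem metriz_seq (Ω : Type u) [TopologicalSpace Ω] [DiscreteTopology Ω] :
    TopologicalSpace.MetrizableSpace (ℕ → Ω) :=
  letI := PiNat.metricSpace (E := fun _ : ℕ => Ω)
  inferInstance

theorem metriz_XX : TopologicalSpace.MetrizableSpace (XX Ω) :=
  haveI := metriz_seq Ω
  IsEmbedding.subtypeVal.metrizableSpace

theorem card_XX (α : Cardinal.{u}) (hα : Cardinal.continuum ≤ α) (hΩ : #Ω = α) : #(XX Ω) = α := by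
  have hα0 : ℵ₀ ≤ α := aleph0_le_continuum.trans hα
  have hJ : #JJ = 𝔠 := by
    change #(ℤ → Prop) = 𝔠
    simp
  haveI : Infinite Ω := Cardinal.infinite_iff.2 (hΩ ▸ hα0)
  apply le_antisymm
  · let f1 : (JJ × ℝ × ℕ) × Ω → EE Ω := fun p => (spike p.1.1 p.1.2.1, hf p.1.2.2, fun _ => p.2)
    let f2 : JJ × Ω → EE Ω := fun p => (spike p.1 1, 0, fun _ => p.2)
    let f3 : ℕ × List Ω × Ω → EE Ω := fun p => (0, hf p.1, fun j => p.2.1.getD j p.2.2)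
    have hsub : {z : EE Ω | inX Ω z} ⊆ Set.range f1 ∪ (Set.range f2 ∪ Set.range f3) := by
      rintro z (⟨M, t, n, b, h0, h1, hM, rfl⟩ | ⟨M, b, rfl⟩ | ⟨n, x, hx, rfl⟩)
      · exact Or.inl ⟨((M, t, n), b), rfl⟩
      · exact Or.inr (Or.inl ⟨(M, b), rfl⟩)
      · refine Or.inr (Or.inr ?_)
        obtain ⟨k, hk⟩ := mn_mem x
        refine ⟨(n, (List.range k).map x, x k), ?_⟩
        simp only [f3, Prod.mk.injEq, true_and]
        funext j
        by_cases hj : j < k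
        · simp [List.getD, hj]
        · simp only [List.getD]
          rw [List.getElem?_eq_none (by simpa using hj)]
          simp only [Option.getD_none]
          exact le_antisymm (hk.trans_le (mn_le _ _)) (hx (not_lt.1 hj))
    have h1 : #(Set.range f1) ≤ α := by
      refine mk_range_le.trans ?_
      simp only [mk_prod, hJ, hΩ, mk_real, mk_nat, lift_mul, lift_continuum, lift_aleph0, lift_id,
        lift_uzero, continuum_mul_aleph0, continuum_mul_self]
      exact mul_le_of_le hα0 hα le_rfl
    have h2 : #(Set.range f2) ≤ α := by
      refine mk_range_le.trans ?_
      simp only [mk_prod, hJ, hΩ, lift_continuum, lift_uzero]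
      exact mul_le_of_le hα0 hα le_rfl
    have h3 : #(Set.range f3) ≤ α := by
      refine mk_range_le.trans ?_
      simp only [mk_prod, mk_list_eq_mk, hΩ, mk_nat, lift_aleph0, lift_uzero, lift_id, lift_mul]
      exact mul_le_of_le hα0 hα0 (mul_le_of_le hα0 le_rfl le_rfl)
    calc #(XX Ω) = #{z : EE Ω | inX Ω z} := rfl
      _ ≤ _ := mk_le_mk_of_subset hsub
      _ ≤ _ := mk_union_le _ _
      _ ≤ α := add_le_of_le hα0 h1 ((mk_union_le _ _).trans (add_le_of_le hα0 h2 h3))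
  · rw [← hΩ]
    refine mk_le_of_injective (f := fun b : Ω => (cPt 0 b : XX Ω)) ?_
    intro b b' h
    exact congrFun (congrArg xx h) 0

end
end Space

theorem statement3 (α : Cardinal.{u}) (hα : Cardinal.continuum ≤ α) :
    ∃ (X : Type u) (tX : TopologicalSpace X),
      @TopologicalSpace.MetrizableSpace X tX ∧ #X = α ∧
      @RepresentsByClopenEmb α X tX := by
  classical
  have hα0 : ℵ₀ ≤ α := aleph0_le_continuum.trans hα
  let L : Type u := α.out
  letI : LinearOrder L := linearOrderOfSTO (WellOrderingRel (α := L))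
  haveI : WellFoundedLT L := ⟨(WellOrderingRel.isWellOrder (α := L)).wf⟩
  let Ω : Type u := WithBot L
  letI : TopologicalSpace Ω := ⊥
  haveI : DiscreteTopology Ω := ⟨rfl⟩
  have hL : #L = α := mk_out α
  have hΩ : #Ω = α := by
    change #(Option L) = α
    rw [mk_option, hL]
    exact add_one_eq hα0
  refine ⟨XX Ω, inferInstance, metriz_XX, card_XX α hα hΩ, represents α ?_⟩
  intro Q hQ
  rw [← hL] at hQ
  obtain ⟨g⟩ := hQ
  exact ⟨fun q => ((g q : L) : WithBot L), fun a b h => g.injective (WithBot.coe_injective h),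
    fun q => WithBot.coe_ne_bot⟩
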